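/- arXiv:0801.3157 — 2 statements merged into one kernel-verified Lean document; each statement's English description precedes it below -/
import Mathlib

section
/- Let θ ∈ (0,1) be the unique solution of 3(1−θ)²(√6 + 1/3)/(2(2θ+1)) = 4, let γ ≥ 1 be real, and set μ = (√6 + 1/3)·γ. Let n ≥ 2 be an integer and F ≥ 0 a real number with n·F ≤ θ·μ·ln(n), and assume (1−θ)·μ·ln(n) ≥ 2. If X is a random variable with the Poisson distribution of parameter n·F, then P( X ≥ n·F + (1−θ)·μ·ln(n) ) ≤ F·n^{−γ}. -/
open MeasureTheory ProbabilityTheory Real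

theorem poissonMeasure_singleton_add_le (r : NNReal) (k j : ℕ) :
    poissonMeasure r {k + j} ≤
      ENNReal.ofReal ((r : ℝ) ^ k / k.factorial) * poissonMeasure r {j} := by
  rw [poissonMeasure_singleton, poissonMeasure_singleton,
    ← ENNReal.ofReal_mul (by positivity)]
  apply ENNReal.ofReal_le_ofReal
  have h : ((k.factorial : ℝ) * j.factorial) ≤ (k + j).factorial := by
    exact_mod_cast Nat.le_of_dvd (Nat.factorial_pos _)
      (Nat.factorial_mul_factorial_dvd_factorial_add k j)
  calc exp (-r) * (r : ℝ) ^ (k + j) / (k + j).factorial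
      ≤ exp (-r) * (r : ℝ) ^ (k + j) / ((k.factorial : ℝ) * j.factorial) := by gcongr
    _ = (r : ℝ) ^ k / k.factorial * (exp (-r) * (r : ℝ) ^ j / j.factorial) := by
      rw [pow_add]; field_simp

theorem poissonMeasure_Ici_le (r : NNReal) (k : ℕ) :
    poissonMeasure r (Set.Ici k) ≤ ENNReal.ofReal ((r : ℝ) ^ k / k.factorial) := by
  have hsub : Set.Ici k ⊆ ⋃ j : ℕ, {k + j} := by
    intro x hx
    obtain ⟨j, rfl⟩ := Nat.exists_eq_add_of_le (Set.mem_Ici.mp hx)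
    exact Set.mem_iUnion.mpr ⟨j, rfl⟩
  have hone : ∑' j : ℕ, poissonMeasure r {j} = 1 := by
    simp_rw [poissonMeasure_singleton]
    rw [← ENNReal.ofReal_tsum_of_nonneg (fun _ => by positivity)
      (hasSum_one_poissonMeasure r).summable, (hasSum_one_poissonMeasure r).tsum_eq,
      ENNReal.ofReal_one]
  calc poissonMeasure r (Set.Ici k)
      ≤ ∑' j : ℕ, poissonMeasure r {k + j} := (measure_mono hsub).trans (measure_iUnion_le _)
    _ ≤ ∑' j : ℕ, ENNReal.ofReal ((r : ℝ) ^ k / k.factorial) * poissonMeasure r {j} :=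
      ENNReal.tsum_le_tsum fun j => poissonMeasure_singleton_add_le r k j
    _ = ENNReal.ofReal ((r : ℝ) ^ k / k.factorial) := by rw [ENNReal.tsum_mul_left, hone, mul_one]

theorem pow_div_factorial_le_mul_exp_neg {m : ℝ} {k : ℕ} (hm : 0 ≤ m) (hk : 2 ≤ k)
    (hmk : m ≤ k / 64) : m ^ k / k.factorial ≤ m * exp (-k) := by
  have hk2 : (2 : ℝ) ≤ k := by exact_mod_cast hk
  have hexp : (1 : ℝ) / 64 ≤ exp (-4) := by
    rw [exp_neg, one_div]
    apply inv_anti₀ (exp_pos _)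
    calc exp 4 = exp 1 ^ 4 := by rw [← exp_nat_mul]; norm_num
      _ ≤ 2.7182818286 ^ 4 := by gcongr; exact exp_one_lt_d9.le
      _ ≤ 64 := by norm_num
  have hm' : m ≤ k * exp (-4) := by nlinarith
  have hfac : (k : ℝ) ^ k * exp (-k) ≤ k.factorial := by
    have := pow_div_factorial_le_exp (k : ℝ) (by positivity) k
    rw [div_le_iff₀ (by positivity)] at this
    rw [exp_neg, ← div_eq_mul_inv, div_le_iff₀ (exp_pos _)]
    linarith
  obtain ⟨i, rfl⟩ : ∃ i, k = i + 1 := ⟨k - 1, by omega⟩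
  have hpow : m ^ i ≤ exp (-((i + 1 : ℕ) : ℝ)) * (i + 1).factorial := by
    calc m ^ i ≤ (((i + 1 : ℕ) : ℝ) * exp (-4)) ^ i := by gcongr
      _ = ((i + 1 : ℕ) : ℝ) ^ i * exp (i * -4) := by rw [mul_pow, ← exp_nat_mul]
      _ ≤ ((i + 1 : ℕ) : ℝ) ^ (i + 1) * exp (-((i + 1 : ℕ) : ℝ) + -((i + 1 : ℕ) : ℝ)) := by
        gcongr
        · linarith
        · omega
        · push_cast at hk2 ⊢
          linarith
      _ = exp (-((i + 1 : ℕ) : ℝ)) * (((i + 1 : ℕ) : ℝ) ^ (i + 1) * exp (-((i + 1 : ℕ) : ℝ))) := by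
        rw [exp_add]; ring
      _ ≤ _ := by gcongr
  rw [div_le_iff₀ (by positivity), pow_succ']
  calc m * m ^ i ≤ m * (exp (-((i + 1 : ℕ) : ℝ)) * (i + 1).factorial) := by gcongr
    _ = _ := by ring

/-- a Poisson deviation bound (Lemma on "large deviation, small mass"). -/
theorem statement_14
    (θ : ℝ) (hθ : θ ∈ Set.Ioo (0:ℝ) 1)
    (hθeq : 3 * (1 - θ) ^ 2 * (Real.sqrt 6 + 1/3) / (2 * (2 * θ + 1)) = 4)
    (γ : ℝ) (hγ : 1 ≤ γ)
    (μ : ℝ) (hμ : μ = (Real.sqrt 6 + 1/3) * γ)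
    (n : ℕ) (hn : 2 ≤ n) (F : ℝ) (hF : 0 ≤ F)
    (hnF : (n : ℝ) * F ≤ θ * μ * Real.log n)
    (hbig : 2 ≤ (1 - θ) * μ * Real.log n)
    {Ω : Type} [MeasurableSpace Ω] (P : Measure Ω) [IsProbabilityMeasure P]
    (X : Ω → ℕ) (hX : Measurable X)
    (hpois : P.map X = ProbabilityTheory.poissonMeasure (Real.toNNReal ((n : ℝ) * F))) :
    P {ω | (n : ℝ) * F + (1 - θ) * μ * Real.log n ≤ (X ω : ℝ)}
      ≤ ENNReal.ofReal (F * (n : ℝ) ^ (-γ)) := by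
  obtain ⟨hθ0, hθ1⟩ := hθ
  have hn0 : (0 : ℝ) < n := by positivity
  have hL : 0 < log n := log_pos (by exact_mod_cast hn)
  set c := Real.sqrt 6 + 1 / 3 with hc
  have hc_ge : 2.78 ≤ c := by
    have : 2.449 ≤ Real.sqrt 6 := Real.le_sqrt_of_sq_le (by norm_num)
    rw [hc]; norm_num at this ⊢; linarith
  have hc_le : c ≤ 2.784 := by
    have : Real.sqrt 6 ≤ 2.45 := Real.sqrt_le_iff.mpr (by norm_num)
    rw [hc]; norm_num at this ⊢; linarith
  have hθ_le : θ ≤ 1 / 65 := by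
    rw [div_eq_iff (by positivity)] at hθeq
    nlinarith [mul_le_mul_of_nonneg_left hc_le (sq_nonneg (1 - θ))]
  have hμ_pos : 0 < μ := by rw [hμ]; positivity
  have hμL : 0 < μ * log n := by positivity
  set m := (n : ℝ) * F with hm
  set d := (1 - θ) * μ * log n with hd
  have hm0 : 0 ≤ m := by positivity
  have hmd : m ≤ d / 64 := by nlinarith
  have hd_ge : (1 + γ) * log n ≤ d := by
    have : 1 + γ ≤ (1 - θ) * μ := by
      rw [hμ]
      nlinarith [mul_le_mul (show 64 / 65 ≤ 1 - θ by linarith) hc_ge (by norm_num) (by linarith)]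
    exact mul_le_mul_of_nonneg_right this hL.le
  set k := ⌈m + d⌉₊ with hk
  have hk_ge : m + d ≤ k := Nat.le_ceil _
  have hk2 : 2 ≤ k := by
    have : (2 : ℝ) ≤ k := by linarith
    exact_mod_cast this
  have hset : {ω | m + d ≤ (X ω : ℝ)} = X ⁻¹' Set.Ici k := by
    ext ω
    simp [hk, Nat.ceil_le]
  rw [hset, ← Measure.map_apply hX measurableSet_Ici, hpois]
  refine (poissonMeasure_Ici_le _ k).trans (ENNReal.ofReal_le_ofReal ?_)
  rw [Real.coe_toNNReal _ hm0]
  calc m ^ k / k.factorial ≤ m * exp (-k) :=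
      pow_div_factorial_le_mul_exp_neg hm0 hk2 (by linarith)
    _ ≤ m * exp (-((1 + γ) * log n)) := by gcongr; linarith
    _ = F * (n : ℝ) ^ (-γ) := by
      rw [rpow_def_of_pos hn0, show -((1 + γ) * log n) = -log n + log n * -γ by ring, exp_add,
        exp_neg, exp_log hn0, hm]
      field_simp
end

section
/- Let n ≥ 2 be an integer, γ > 0, and let V̂ ≥ 0 and w ≥ 0 be real numbers. Set Ṽ = V̂ + √(2γ·ln(n)·V̂·w²/n²) + 3γ·ln(n)·w²/n² and η = √(2γ·ln(n)·Ṽ) + γ·ln(n)·w/(3n). Then for every θ > 0, with c₁ = √(1 + 1/(2θ)) and c₂ = 3·√(2θ+6) + 1: √(2γ·ln(n)·V̂) + γ·ln(n)·w/(3n) ≤ η ≤ c₁·√(2γ·ln(n)·V̂) + c₂·γ·ln(n)·w/(3n). -/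
open Real

/-- Young's inequality under a square root: the cross term `2ab` is split with weight `θ`. -/
lemma sqrt_sq_add_two_mul_add_le {a b θ : ℝ} (ha : 0 ≤ a) (hb : 0 ≤ b) (hθ : 0 < θ) :
    √(a ^ 2 + 2 * a * b + 6 * b ^ 2) ≤ √(1 + 1 / (2 * θ)) * a + √(2 * θ + 6) * b := by
  have young : 2 * a * b ≤ 1 / (2 * θ) * a ^ 2 + 2 * θ * b ^ 2 := by
    have h : 1 / (2 * θ) * a ^ 2 + 2 * θ * b ^ 2 - 2 * a * b
        = (a - 2 * θ * b) ^ 2 / (2 * θ) := by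
      field_simp
      ring
    have : 0 ≤ (a - 2 * θ * b) ^ 2 / (2 * θ) := by positivity
    linarith
  have hc : √(1 + 1 / (2 * θ)) ^ 2 = 1 + 1 / (2 * θ) := sq_sqrt (by positivity)
  have hd : √(2 * θ + 6) ^ 2 = 2 * θ + 6 := sq_sqrt (by positivity)
  have cross : 0 ≤ √(1 + 1 / (2 * θ)) * a * (√(2 * θ + 6) * b) := by positivity
  refine sqrt_le_iff.mpr ⟨by positivity, ?_⟩
  rw [add_sq, mul_pow, mul_pow, hc, hd]
  linarith

/-- deterministic upper and lower bounds for the random threshold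
`η = √(2γ ln n Ṽ) + γ ln n w/(3n)` where `Ṽ = V̂ + √(2γ ln n V̂ w²/n²) + 3γ ln n w²/n²`. -/
theorem statement_16
    (n : ℕ) (hn : 2 ≤ n) (γ : ℝ) (hγ : 0 < γ)
    (Vh w : ℝ) (hV : 0 ≤ Vh) (hw : 0 ≤ w)
    (Vt η : ℝ)
    (hVt : Vt = Vh + Real.sqrt (2 * γ * Real.log n * Vh * w ^ 2 / (n : ℝ) ^ 2)
        + 3 * γ * Real.log n * w ^ 2 / (n : ℝ) ^ 2)
    (hη : η = Real.sqrt (2 * γ * Real.log n * Vt) + γ * Real.log n * w / (3 * n))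
    (θ : ℝ) (hθ : 0 < θ) :
    Real.sqrt (2 * γ * Real.log n * Vh) + γ * Real.log n * w / (3 * n) ≤ η ∧
    η ≤ Real.sqrt (1 + 1 / (2 * θ)) * Real.sqrt (2 * γ * Real.log n * Vh)
        + (3 * Real.sqrt (2 * θ + 6) + 1) * (γ * Real.log n * w / (3 * n)) := by
  have hL : 0 ≤ γ * Real.log n := mul_nonneg hγ.le (Real.log_natCast_nonneg n)
  have hn0 : (0 : ℝ) < n := by positivity
  have hu : 0 ≤ w / n := by positivity
  have hA : √(2 * γ * Real.log n * Vh) ^ 2 = 2 * γ * Real.log n * Vh :=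
    sq_sqrt (by rw [mul_assoc 2]; positivity)
  have hcross : √(2 * γ * Real.log n * Vh * w ^ 2 / (n : ℝ) ^ 2)
      = √(2 * γ * Real.log n * Vh) * (w / n) := by
    rw [mul_div_assoc, ← div_pow, sqrt_mul' _ (sq_nonneg _), sqrt_sq hu]
  have hA0 := sqrt_nonneg (2 * γ * Real.log n * Vh)
  have hb : 0 ≤ γ * Real.log n * (w / n) := mul_nonneg hL hu
  have hw3 : γ * Real.log n * w / (3 * n) = γ * Real.log n * (w / n) / 3 := by
    field_simp
  have hVt' : 2 * γ * Real.log n * Vt = √(2 * γ * Real.log n * Vh) ^ 2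
      + 2 * √(2 * γ * Real.log n * Vh) * (γ * Real.log n * (w / n))
      + 6 * (γ * Real.log n * (w / n)) ^ 2 := by
    rw [hA, hVt, hcross]
    ring
  rw [hη, hVt', hw3]
  constructor
  · refine add_le_add_left ?_ _
    refine le_sqrt_of_sq_le ?_
    rw [add_assoc]
    exact le_add_of_nonneg_right (by positivity)
  · linarith [sqrt_sq_add_two_mul_add_le hA0 hb hθ]
end
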